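/- Joining by minimization of models fails for mutually dependent modules: there exist ASP program modules P1 = ⟨{a ← b.; ⊥ ← not b.}, {b}, {a}, ∅⟩ and P2 = ⟨{b ← a.}, {a}, {b}, ∅⟩ such that AS(P1) = {{a,b}} and AS(P2) = {∅, {a,b}}, the relaxed composition P1 ⊎ P2 has empty input signature and no stable models, AS(P1 ⊎ P2) = ∅, while AS(P1) ⋈ AS(P2) = {{a,b}}, so {a,b} is a ⊆-minimal element of AS(P1) ⋈ AS(P2); hence no join operation that selects minimal elements of the natural join can coincide with the stable models of the composition. -/

import Mathlib

open scoped Classical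

noncomputable section

/-- A rule: an optional head atom (none = integrity constraint), a flag marking
choice facts, a set of positive body atoms and a set of negative body atoms. -/
structure ASPRule (A : Type*) where
  head : Option A
  isChoice : Bool
  pos : Set A
  neg : Set A

/-- Atoms occurring in a rule. -/
def ASPRule.atoms {A : Type*} (r : ASPRule A) : Set A :=
  (r.head.elim ∅ fun a => {a}) ∪ r.pos ∪ r.neg

/-- Atoms occurring in a program. -/
def progAtoms {A : Type*} (R : Set (ASPRule A)) : Set A :=
  ⋃ r ∈ R, r.atoms

/-- Least model of a positive program (pairs of head and positive body):
the least set of atoms closed under the rules. -/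
def LM {A : Type*} (Q : Set (A × Set A)) : Set A :=
  ⋂₀ {S | ∀ p ∈ Q, p.2 ⊆ S → p.1 ∈ S}

/-- The reduct of a program w.r.t. an interpretation `M`: it contains
`head(r) ← body⁺(r)` for every headed non-choice rule whose negative body is
disjoint from `M`, and the fact `a` for every choice fact `{a}` with `a ∈ M`. -/
def reduct {A : Type*} (R : Set (ASPRule A)) (M : Set A) : Set (A × Set A) :=
  {p | ∃ r ∈ R,
    (r.isChoice = false ∧ r.head = some p.1 ∧ r.pos = p.2 ∧ r.neg ∩ M = ∅) ∨
    (r.isChoice = true ∧ r.head = some p.1 ∧ p.2 = (∅ : Set A) ∧ p.1 ∈ M)}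

/-- `M` is a stable model of program `R`: `M = LM(R^M)` and every integrity
constraint whose negative body avoids `M` has a positive body not contained in `M`. -/
def stableModel {A : Type*} (R : Set (ASPRule A)) (M : Set A) : Prop :=
  M = LM (reduct R M) ∧
  ∀ r ∈ R, r.head = none → r.neg ∩ M = ∅ → ¬ r.pos ⊆ M

/-- Facts for a set of (input) atoms. -/
def inputFacts {A : Type*} (X : Set A) : Set (ASPRule A) :=
  {r | ∃ a ∈ X, r = ⟨some a, false, ∅, ∅⟩}

/-- Choice facts `{a}` for a set of atoms. -/
def choiceFacts {A : Type*} (X : Set A) : Set (ASPRule A) :=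
  {r | ∃ a ∈ X, r = ⟨some a, true, ∅, ∅⟩}

/-- An (unbundled) ASP program module `⟨R, I, O, H⟩`. -/
structure PreModule (A : Type*) where
  rules : Set (ASPRule A)
  I : Set A
  O : Set A
  H : Set A

namespace PreModule

variable {A : Type*}

/-- `At(P) = I ∪ O ∪ H`. -/
def atoms (P : PreModule A) : Set A := P.I ∪ P.O ∪ P.H

/-- Visible atoms `At_v(P) = I ∪ O`. -/
def Atv (P : PreModule A) : Set A := P.I ∪ P.O

/-- Well-formedness of a module: `I`, `O`, `H` pairwise disjoint, the atoms
of the rules lie in `At(P)`, and no rule head is an input atom. -/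
def wf (P : PreModule A) : Prop :=
  Disjoint P.I P.O ∧ Disjoint P.I P.H ∧ Disjoint P.O P.H ∧
  progAtoms P.rules ⊆ P.atoms ∧
  ∀ r ∈ P.rules, ∀ a, r.head = some a → a ∉ P.I

/-- Stable models of a module: `M ⊆ At(P)` that are stable models of the rules
together with a fact for every true input atom. -/
def AS (P : PreModule A) : Set (Set A) :=
  {M | M ⊆ P.atoms ∧ stableModel (P.rules ∪ inputFacts (M ∩ P.I)) M}

end PreModule

/-- Edge of the positive dependency graph: from `a` to `b` whenever some rule
has head `b` and `a` in its positive body. -/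
def depEdge {A : Type*} (R : Set (ASPRule A)) (a b : A) : Prop :=
  ∃ r ∈ R, r.head = some b ∧ a ∈ r.pos

/-- `P1` and `P2` are mutually independent: no cycle of the positive dependency
graph of `R1 ∪ R2` passes through atoms of both `At(P1)` and `At(P2)`. -/
def mutuallyIndependent {A : Type*} (P1 P2 : PreModule A) : Prop :=
  ¬ ∃ x y, x ∈ P1.atoms ∧ y ∈ P2.atoms ∧
      Relation.TransGen (depEdge (P1.rules ∪ P2.rules)) x y ∧
      Relation.TransGen (depEdge (P1.rules ∪ P2.rules)) y x

/-- Composition `P1 ⊕ P2`. -/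
def oplus {A : Type*} (P1 P2 : PreModule A) : PreModule A :=
  ⟨P1.rules ∪ P2.rules, (P1.I \ P2.O) ∪ (P2.I \ P1.O), P1.O ∪ P2.O, P1.H ∪ P2.H⟩

/-- `P1 ⊕ P2` is defined. -/
def oplusDefined {A : Type*} (P1 P2 : PreModule A) : Prop :=
  P1.O ∩ P2.O = ∅ ∧ P1.H ∩ P2.atoms = ∅ ∧ P2.H ∩ P1.atoms = ∅

/-- The module union `P1 ⊔ P2` is defined: `P1 ⊕ P2` is defined and `P1`, `P2`
are mutually independent (in which case `P1 ⊔ P2 = P1 ⊕ P2`). -/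
def sqcupDefined {A : Type*} (P1 P2 : PreModule A) : Prop :=
  oplusDefined P1 P2 ∧ mutuallyIndependent P1 P2

/-- Natural join of sets of interpretations w.r.t. modules `P1`, `P2`. -/
def natJoin {A : Type*} (P1 P2 : PreModule A) (A1 A2 : Set (Set A)) : Set (Set A) :=
  {M | ∃ M1 ∈ A1, ∃ M2 ∈ A2, M1 ∩ P2.Atv = M2 ∩ P1.Atv ∧ M = M1 ∪ M2}

/-- Relaxed composition `P1 ⊎ P2` (common output atoms allowed). -/
def uplus {A : Type*} (P1 P2 : PreModule A) : PreModule A :=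
  ⟨P1.rules ∪ P2.rules, (P1.I ∪ P2.I) \ (P1.O ∪ P2.O), P1.O ∪ P2.O, P1.H ∪ P2.H⟩

/-- `P1 ⊎ P2` is defined: the modules respect each other's hidden atoms. -/
def uplusDefined {A : Type*} (P1 P2 : PreModule A) : Prop :=
  P1.H ∩ P2.atoms = ∅ ∧ P2.H ∩ P1.atoms = ∅

/-- Hiding a set `S` of atoms in a module. -/
def hideS {A : Type*} (P : PreModule A) (S : Set A) : PreModule A :=
  ⟨P.rules ∪ choiceFacts (P.I ∩ S), P.I \ S, P.O \ S, P.H ∪ (P.Atv ∩ S)⟩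

/-- Projecting a module onto a set `S` of atoms. -/
def projectS {A : Type*} (P : PreModule A) (S : Set A) : PreModule A :=
  ⟨P.rules ∪ choiceFacts (P.I \ S), P.I ∩ S, P.O ∩ S, P.H ∪ (P.Atv \ S)⟩

/-- Renaming the head `o` of a rule to `o'`. -/
def renameRule {A : Type*} (o o' : A) (r : ASPRule A) : ASPRule A :=
  if r.head = some o then { r with head := some o' } else r

/-- Renamed output module `ρ_{o'←o}(P)`. -/
def renameOut {A : Type*} (P : PreModule A) (o o' : A) : PreModule A :=
  ⟨(renameRule o o' '' P.rules) ∪ {⟨none, false, {o'}, {o}⟩},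
   P.I ∪ {o}, {o'} ∪ (P.O \ {o}), P.H⟩

/-- Renaming heads in a rule for every atom of `Os`, via `f`. -/
def renameRuleS {A : Type*} (Os : Set A) (f : A → A) (r : ASPRule A) : ASPRule A :=
  { r with head := r.head.map fun a => if a ∈ Os then f a else a }

/-- Renamed output module `ρ_{O'←O}(P)` where `O' = f '' Os` atom by atom. -/
def renameOutS {A : Type*} (P : PreModule A) (Os : Set A) (f : A → A) : PreModule A :=
  ⟨(renameRuleS Os f '' P.rules) ∪ {r | ∃ o ∈ Os, r = ⟨none, false, {f o}, {o}⟩},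
   P.I ∪ Os, (f '' Os) ∪ (P.O \ Os), P.H⟩

/-- The module `P_union` with rules `o ← o'` and `o ← o''` for each `o ∈ Os`,
where `o' = f' o` and `o'' = f'' o`. -/
def Punion {A : Type*} (Os : Set A) (f' f'' : A → A) : PreModule A :=
  ⟨{r | ∃ o ∈ Os, r = ⟨some o, false, {f' o}, ∅⟩ ∨ r = ⟨some o, false, {f'' o}, ∅⟩},
   (f' '' Os) ∪ (f'' '' Os), Os, ∅⟩

/-- The module `P_filter` with constraints `⊥ ← o', not o''` and `⊥ ← not o', o''`. -/
def Pfilter {A : Type*} (Os : Set A) (f' f'' : A → A) : PreModule A :=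
  ⟨{r | ∃ o ∈ Os, r = ⟨none, false, {f' o}, {f'' o}⟩ ∨ r = ⟨none, false, {f'' o}, {f' o}⟩},
   (f' '' Os) ∪ (f'' '' Os), ∅, ∅⟩

/-- Transformed relaxed composition `P1 ⊎^RT P2`, with fresh primed and
double-primed atoms given by `f'` and `f''` on `O = O1 ∩ O2`. -/
def uplusRT {A : Type*} (P1 P2 : PreModule A) (f' f'' : A → A) : PreModule A :=
  hideS
    (oplus (oplus (renameOutS P1 (P1.O ∩ P2.O) f') (renameOutS P2 (P1.O ∩ P2.O) f''))
      (Punion (P1.O ∩ P2.O) f' f''))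
    ((f' '' (P1.O ∩ P2.O)) ∪ (f'' '' (P1.O ∩ P2.O)))

/-- Conservative composition `P1 ⊗ P2`, with fresh primed and double-primed
atoms given by `f'` and `f''` on `O = O1 ∩ O2`. -/
def otimesC {A : Type*} (P1 P2 : PreModule A) (f' f'' : A → A) : PreModule A :=
  hideS
    (oplus
      (oplus (oplus (renameOutS P1 (P1.O ∩ P2.O) f') (renameOutS P2 (P1.O ∩ P2.O) f''))
        (Punion (P1.O ∩ P2.O) f' f''))
      (Pfilter (P1.O ∩ P2.O) f' f''))
    ((f' '' (P1.O ∩ P2.O)) ∪ (f'' '' (P1.O ∩ P2.O)))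

/-- The atoms `O' = f' '' (O1 ∩ O2)` and `O'' = f'' '' (O1 ∩ O2)` are fresh:
`f'`, `f''` are injective on `O1 ∩ O2`, the images avoid all atoms of `P1` and
`P2`, and the two images are disjoint. -/
def freshPair {A : Type*} (P1 P2 : PreModule A) (f' f'' : A → A) : Prop :=
  Set.InjOn f' (P1.O ∩ P2.O) ∧ Set.InjOn f'' (P1.O ∩ P2.O) ∧
  (f' '' (P1.O ∩ P2.O)) ∩ (P1.atoms ∪ P2.atoms) = ∅ ∧
  (f'' '' (P1.O ∩ P2.O)) ∩ (P1.atoms ∪ P2.atoms) = ∅ ∧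
  (f' '' (P1.O ∩ P2.O)) ∩ (f'' '' (P1.O ∩ P2.O)) = ∅

/-- Modular equivalence `P ≡_m Q`: same input signature, same visible atoms,
and a bijection between the stable models preserving the visible parts. -/
def modEquiv {A : Type*} (P Q : PreModule A) : Prop :=
  P.I = Q.I ∧ P.Atv = Q.Atv ∧
  ∃ f : Set A → Set A, Set.BijOn f P.AS Q.AS ∧
    ∀ M ∈ P.AS, M ∩ P.Atv = f M ∩ Q.Atv

end

/-! Each of the two modules receives as an input the atom that supports its own output, so `{a, b}`
is stable for both and survives the join. In the composition neither atom is an input: `a` and `b`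
support only each other, so `{a, b}` is an unfounded set and no stable model contains `b`, contrary
to the constraint `⊥ ← not b`. -/

section PositivePrograms

variable {A : Type*} {Q : Set (A × Set A)} {U : Set A}

/-- `S` is closed under the rules of the positive program `Q`, given as in `LM` by pairs of head and
body. -/
def IsClosedUnder (Q : Set (A × Set A)) (S : Set A) : Prop :=
  ∀ p ∈ Q, p.2 ⊆ S → p.1 ∈ S

/-- `U` is an unfounded set of the positive program `Q`: a rule can derive an atom of `U` only from
another atom of `U`. Negative bodies do not occur, as the notion is applied to reducts. -/
def IsUnfounded (Q : Set (A × Set A)) (U : Set A) : Prop :=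
  ∀ p ∈ Q, p.1 ∈ U → (p.2 ∩ U).Nonempty

theorem isLeast_LM (Q : Set (A × Set A)) : IsLeast {S | IsClosedUnder Q S} (LM Q) :=
  ⟨fun p hp hbody S hS => hS p hp fun _ hx => hbody hx S hS,
    fun _ hS => Set.sInter_subset_of_mem hS⟩

theorem IsUnfounded.disjoint_LM (hU : IsUnfounded Q U) : Disjoint (LM Q) U := by
  have isClosedUnder_compl : IsClosedUnder Q Uᶜ := fun p hp hbody hhead =>
    let ⟨_, hxbody, hxU⟩ := hU p hp hhead
    hbody hxbody hxU
  exact Set.disjoint_left.mpr ((isLeast_LM Q).2 isClosedUnder_compl)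

theorem LM_insert_facts (h : A) (B X : Set A) :
    LM (insert (h, B) (X ×ˢ {∅})) = if B ⊆ X then insert h X else X := by
  refine (isLeast_LM _).unique ?_
  have isClosedUnder_iff (S : Set A) :
      IsClosedUnder (insert (h, B) (X ×ˢ {∅})) S ↔ (B ⊆ S → h ∈ S) ∧ X ⊆ S := by
    simp [IsClosedUnder, Set.subset_def]
  simp only [isClosedUnder_iff]
  split_ifs with hBX
  · exact ⟨⟨fun _ => Set.mem_insert h X, Set.subset_insert h X⟩,
      fun S ⟨hhead, hXS⟩ => Set.insert_subset (hhead (hBX.trans hXS)) hXS⟩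
  · exact ⟨⟨fun hB => absurd hB hBX, subset_rfl⟩, fun S hS => hS.2⟩

end PositivePrograms

section Reducts

variable {A : Type*}

theorem reduct_union (R R' : Set (ASPRule A)) (M : Set A) :
    reduct (R ∪ R') M = reduct R M ∪ reduct R' M := by
  ext p
  simp only [reduct, Set.mem_ofPred_eq, Set.mem_union, or_and_right, exists_or]

theorem reduct_inputFacts (X M : Set A) : reduct (inputFacts X) M = X ×ˢ {∅} := by
  ext ⟨h, B⟩
  simp only [reduct, inputFacts, Set.mem_ofPred_eq, Set.mem_prod, Set.mem_singleton_iff]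
  constructor
  · rintro ⟨_, ⟨x, hx, rfl⟩, ⟨-, hhead, hbody, -⟩ | ⟨hchoice, -⟩⟩
    · cases hhead
      exact ⟨hx, hbody.symm⟩
    · cases hchoice
  · rintro ⟨hh, rfl⟩
    exact ⟨_, ⟨h, hh, rfl⟩, .inl ⟨rfl, rfl, rfl, Set.empty_inter M⟩⟩

theorem reduct_singleton_definite (h : A) (B M : Set A) :
    reduct {⟨some h, false, B, ∅⟩} M = {(h, B)} := by
  ext ⟨h', B'⟩
  simp [reduct, eq_comm (a := h'), eq_comm (a := B')]

theorem reduct_eq_empty_of_head_eq_none {C : Set (ASPRule A)} (hC : ∀ c ∈ C, c.head = none)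
    (M : Set A) : reduct C M = ∅ := by
  refine Set.eq_empty_of_forall_notMem ?_
  rintro p ⟨c, hc, ⟨-, hhead, -⟩ | ⟨-, hhead, -⟩⟩ <;> simp [hC c hc] at hhead

theorem stableModel_union_constraints {C : Set (ASPRule A)} (hC : ∀ c ∈ C, c.head = none)
    (R : Set (ASPRule A)) (M : Set A) :
    stableModel (R ∪ C) M ↔ stableModel R M ∧ ∀ c ∈ C, c.neg ∩ M = ∅ → ¬ c.pos ⊆ M := by
  have constraints_of_C : (∀ c ∈ C, c.head = none → c.neg ∩ M = ∅ → ¬ c.pos ⊆ M) ↔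
      ∀ c ∈ C, c.neg ∩ M = ∅ → ¬ c.pos ⊆ M :=
    forall₂_congr fun c hc => by simp only [hC c hc, forall_const]
  simp only [stableModel, reduct_union, reduct_eq_empty_of_head_eq_none hC, Set.union_empty,
    Set.mem_union, or_imp, forall_and, constraints_of_C, and_assoc]

end Reducts

namespace PreModule

variable {A : Type*}

/-- The module `⟨{h ← B}, B, {h}, ∅⟩` of a single definite rule whose body atoms are inputs. -/
def ofRule (h : A) (B : Set A) : PreModule A :=
  ⟨{⟨some h, false, B, ∅⟩}, B, {h}, ∅⟩

/-- The module `P` with the integrity constraint `⊥ ← not a` added. -/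
def require (P : PreModule A) (a : A) : PreModule A :=
  { P with rules := P.rules ∪ {⟨none, false, ∅, {a}⟩} }

theorem eq_LM_of_mem_AS {P : PreModule A} {M : Set A} (hM : M ∈ P.AS) :
    M = LM (reduct P.rules M ∪ (M ∩ P.I) ×ˢ {∅}) := by
  rw [← reduct_inputFacts _ M, ← reduct_union]
  exact hM.2.1

theorem disjoint_of_isUnfounded {P : PreModule A} {M U : Set A} (hM : M ∈ P.AS)
    (hI : Disjoint P.I U) (hU : IsUnfounded (reduct P.rules M) U) : Disjoint M U := by
  have isUnfounded_with_inputs : IsUnfounded (reduct P.rules M ∪ (M ∩ P.I) ×ˢ {∅}) U := by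
    rintro p (hp | hp) hpU
    · exact hU p hp hpU
    · exact absurd hpU (Set.disjoint_left.mp hI hp.1.2)
  rw [eq_LM_of_mem_AS hM]
  exact isUnfounded_with_inputs.disjoint_LM

theorem AS_require (P : PreModule A) (a : A) : (P.require a).AS = {M ∈ P.AS | a ∈ M} := by
  ext M
  have head_eq_none : ∀ c ∈ ({⟨none, false, ∅, {a}⟩} : Set (ASPRule A)), c.head = none := by
    rintro c rfl
    rfl
  simp only [AS, require, atoms, Set.union_right_comm P.rules,
    stableModel_union_constraints head_eq_none, Set.mem_ofPred_eq, ← and_assoc]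
  simp

theorem uplus_require (P Q : PreModule A) (a : A) :
    uplus (P.require a) Q = (uplus P Q).require a := by
  simp only [uplus, require, Set.union_right_comm]

theorem mem_AS_ofRule_iff {h : A} {B M : Set A} :
    M ∈ (ofRule h B).AS ↔
      M ⊆ insert h B ∧ M = if B ⊆ M then insert h (M ∩ B) else M ∩ B := by
  have no_constraints : ∀ r ∈ ({⟨some h, false, B, ∅⟩} : Set (ASPRule A)) ∪ inputFacts (M ∩ B),
      r.head = none → r.neg ∩ M = ∅ → ¬ r.pos ⊆ M := by
    rintro r (rfl | ⟨_, _, rfl⟩) <;> simp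
  simp only [AS, atoms, ofRule, stableModel, Set.mem_ofPred_eq, reduct_union,
    reduct_singleton_definite, reduct_inputFacts, ← Set.insert_eq (_, _), LM_insert_facts,
    Set.subset_inter_iff, subset_rfl, and_true, Set.union_empty,
    and_iff_left no_constraints]
  rw [Set.union_comm, Set.singleton_union]

theorem AS_ofRule (h : A) (B : Set A) : (ofRule h B).AS = insert (insert h B) (Set.Iio B) := by
  ext M
  rw [mem_AS_ofRule_iff, Set.mem_insert_iff, Set.mem_Iio]
  by_cases hBM : B ⊆ M
  · have not_ssubset : ¬ M ⊂ B := fun hMB => hMB.2 hBM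
    simp only [if_pos hBM, Set.inter_eq_right.mpr hBM, not_ssubset, or_false,
      and_iff_right_of_imp Eq.subset]
  · have ne_insert : M ≠ insert h B := fun hM => hBM (hM ▸ Set.subset_insert h B)
    rw [if_neg hBM, or_iff_right ne_insert, ssubset_iff_subset_not_subset, and_iff_left hBM,
      Set.left_eq_inter]
    exact and_iff_right_of_imp fun hMB : M ⊆ B => hMB.trans (Set.subset_insert h B)

theorem AS_ofRule_singleton (h b : A) : (ofRule h {b}).AS = {∅, {h, b}} := by
  have Iio_singleton : Set.Iio ({b} : Set A) = {∅} := by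
    ext M
    exact Set.ssubset_singleton_iff
  rw [AS_ofRule, Iio_singleton, Set.pair_comm]

theorem AS_ofRule_singleton_require (h b : A) : ((ofRule h {b}).require b).AS = {{h, b}} := by
  rw [AS_require, AS_ofRule_singleton]
  ext M
  constructor
  · rintro ⟨rfl | rfl, hb⟩
    · exact absurd hb (Set.notMem_empty b)
    · rfl
  · rintro rfl
    exact ⟨.inr rfl, .inr rfl⟩

theorem disjoint_of_mem_AS_uplus_ofRule {a b : A} {B C : Set A} (hb : b ∈ B) (ha : a ∈ C)
    {M : Set A} (hM : M ∈ (uplus (ofRule a B) (ofRule b C)).AS) : Disjoint M {a, b} := by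
  refine disjoint_of_isUnfounded hM Set.disjoint_sdiff_left ?_
  have reduct_eq : reduct (uplus (ofRule a B) (ofRule b C)).rules M = {(a, B), (b, C)} := by
    simp only [uplus, ofRule, reduct_union, reduct_singleton_definite, ← Set.insert_eq (_, _)]
  rw [reduct_eq]
  rintro p (rfl | rfl) -
  · exact ⟨b, hb, Set.mem_insert_of_mem a rfl⟩
  · exact ⟨a, ha, Set.mem_insert a {b}⟩

theorem AS_uplus_ofRule_require {a b : A} {B C : Set A} (hb : b ∈ B) (ha : a ∈ C) :
    (uplus ((ofRule a B).require b) (ofRule b C)).AS = ∅ := by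
  rw [uplus_require, AS_require, Set.sep_eq_empty_iff_mem_false]
  exact fun M hM hbM => Set.disjoint_left.mp
    (disjoint_of_mem_AS_uplus_ofRule hb ha hM) hbM (Set.mem_insert_of_mem a rfl)

theorem natJoin_eq_inter {P Q : PreModule A} {V : Set A} {𝓜 𝓝 : Set (Set A)} (hP : P.Atv = V)
    (hQ : Q.Atv = V) (h𝓜 : ∀ M ∈ 𝓜, M ⊆ V) (h𝓝 : ∀ N ∈ 𝓝, N ⊆ V) :
    natJoin P Q 𝓜 𝓝 = 𝓜 ∩ 𝓝 := by
  ext K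
  simp only [natJoin, hP, hQ, Set.mem_ofPred_eq, Set.mem_inter_iff]
  constructor
  · rintro ⟨M, hM, N, hN, hMN, rfl⟩
    rw [Set.inter_eq_left.mpr (h𝓜 M hM), Set.inter_eq_left.mpr (h𝓝 N hN)] at hMN
    subst hMN
    simpa only [Set.union_self] using ⟨hM, hN⟩
  · rintro ⟨hM, hN⟩
    exact ⟨K, hM, K, hN, rfl, (Set.union_self K).symm⟩

end PreModule

/-- Joining by minimization of models fails for mutually dependent modules:
for `P1 = ⟨{a ← b.; ⊥ ← not b.}, {b}, {a}, ∅⟩` and `P2 = ⟨{b ← a.}, {a}, {b}, ∅⟩`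
we have `AS(P1) = {{a,b}}`, `AS(P2) = {∅, {a,b}}`, the relaxed composition has
empty input signature and no stable models, while `AS(P1) ⋈ AS(P2) = {{a,b}}`
with `{a,b}` a `⊆`-minimal element; hence selecting the minimal elements of the
natural join does not coincide with the stable models of the composition. -/
theorem minimization_join_fails {A : Type*} (a b : A) (hab : a ≠ b) :
    ∃ P1 P2 : PreModule A,
      P1 = ⟨{⟨some a, false, {b}, ∅⟩, ⟨none, false, ∅, {b}⟩}, {b}, {a}, ∅⟩ ∧
      P2 = ⟨{⟨some b, false, {a}, ∅⟩}, {a}, {b}, ∅⟩ ∧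
      P1.AS = {{a, b}} ∧
      P2.AS = {∅, {a, b}} ∧
      (uplus P1 P2).I = ∅ ∧
      (uplus P1 P2).AS = ∅ ∧
      natJoin P1 P2 P1.AS P2.AS = {{a, b}} ∧
      ({a, b} : Set A) ∈ natJoin P1 P2 P1.AS P2.AS ∧
      (∀ N ∈ natJoin P1 P2 P1.AS P2.AS, N ⊆ {a, b} → N = {a, b}) ∧
      {N ∈ natJoin P1 P2 P1.AS P2.AS |
          ∀ N' ∈ natJoin P1 P2 P1.AS P2.AS, N' ⊆ N → N' = N} ≠
        (uplus P1 P2).AS := by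
  let P₁ : PreModule A := (PreModule.ofRule a {b}).require b
  let P₂ : PreModule A := PreModule.ofRule b {a}
  have hAS₁ : P₁.AS = {{a, b}} := PreModule.AS_ofRule_singleton_require a b
  have hAS₂ : P₂.AS = {∅, {a, b}} := by rw [PreModule.AS_ofRule_singleton, Set.pair_comm b a]
  have hI : (uplus P₁ P₂).I = ∅ := Set.sdiff_eq_empty.mpr (Set.union_comm {b} {a}).subset
  have hAS : (uplus P₁ P₂).AS = ∅ :=
    PreModule.AS_uplus_ofRule_require (Set.mem_singleton b) (Set.mem_singleton a)
  have hjoin : natJoin P₁ P₂ P₁.AS P₂.AS = {{a, b}} := by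
    have hAtv₁ : P₁.Atv = {a, b} := Set.pair_comm b a
    have hAtv₂ : P₂.Atv = {a, b} := rfl
    rw [hAS₁, hAS₂, PreModule.natJoin_eq_inter hAtv₁ hAtv₂] <;> simp
  refine ⟨P₁, P₂, rfl, rfl, hAS₁, hAS₂, hI, hAS, hjoin, ?_⟩
  rw [hjoin, hAS]
  have minimal_ab : ∀ N ∈ ({{a, b}} : Set (Set A)), N ⊆ {a, b} → N = {a, b} := fun _ hN _ => hN
  exact ⟨rfl, minimal_ab, Set.Nonempty.ne_empty ⟨{a, b}, rfl, minimal_ab⟩⟩
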